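/- arXiv:2403.17490 — 2 statements merged into one kernel-verified Lean document; each statement's English description precedes it below -/
import Mathlib

section
/- Given covariants q = (q_i) of order d and contravariants p = (p_i) of order d of Sym^{kd}(W*), both forming bases of their spaces when evaluated at f, with pairing matrix M_{p,q} = (D(p_i, q_j))_{i,j}, the dual basis of (p_i(f)) under the apolarity pairing is given by the tuple (p_i(f)*)_i = M_{p,q}^{-1}·(q_j(f))_j. Consequently, setting f̃_{p,q} = ∑ D(p_{i₁}(f)⋯p_{i_k}(f), f) X_{i₁}⋯X_{i_k}, one has f̃_{p,q}(p₀(f)*,…,p_r(f)*) = ((kd)!/d!^k)·f. -/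
open MvPolynomial Matrix

noncomputable section

def derivOp (K : Type*) [Field K] {σ : Type*} [Fintype σ] [DecidableEq σ]
    (a : σ →₀ ℕ) : Module.End K (MvPolynomial σ K) :=
  (Finset.univ.toList.map fun j : σ => ((MvPolynomial.pderiv j).toLinearMap ^ (a j))).prod

def apol {K : Type*} [Field K] {σ : Type*} [Fintype σ] [DecidableEq σ]
    (u P : MvPolynomial σ K) : MvPolynomial σ K :=
  ∑ a ∈ u.support, u.coeff a • derivOp K a P

def apolS {K : Type*} [Field K] {σ : Type*} [Fintype σ] [DecidableEq σ]
    (u P : MvPolynomial σ K) : K :=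
  MvPolynomial.constantCoeff (apol u P)

def MonIdx (m d : ℕ) : Type := {v : Fin m → ℕ // v ∈ Finset.Nat.antidiagonalTuple m d}

instance (m d : ℕ) : Fintype (MonIdx m d) := by unfold MonIdx; infer_instance
instance (m d : ℕ) : DecidableEq (MonIdx m d) := by unfold MonIdx; infer_instance

/-!
The tensor `C = ∑ j, Xⱼ ⊗ Xⱼ` governs the apolarity pairing `D`: since multiplication by `Xⱼ` is
adjoint to `∂/∂Xⱼ`, Euler's identity shows that contracting `C ^ m` against a form `g` of degree `m`
gives `m! • g`. Hence, if `(eᵢ)` is dual to `(pᵢ)` in degree `d`, expanding the right factors of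
`C ^ d` along `(eᵢ)` yields `C ^ d = d! • ∑ i, pᵢ ⊗ eᵢ`. Contracting
`C ^ (k * d) = d! ^ k • (∑ i, pᵢ ⊗ eᵢ) ^ k` against `f` in these two ways gives the reconstruction
formula, up to division by `d! ^ k`. That `d!` is invertible comes from the existence of a dual
family: `D(pᵢ, Xⱼ ^ d)` is a multiple of `d!`, so `Xⱼ ^ d = ∑ i, D(pᵢ, Xⱼ ^ d) • eᵢ` is one as well.
-/

open scoped TensorProduct

section DualFamily

variable {R N ι : Type*} [CommRing R] [AddCommGroup N] [Module R N] [Fintype ι] [DecidableEq ι]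
  {φ : ι → Module.Dual R N} {q : ι → N}

/-- The family in the span of `q` dual to the functionals `φ`, i.e. the tuple `M⁻¹ · q` for the
pairing matrix `M = (φ i (q j))`. It is meaningful only when `M` is invertible. -/
def dualFamily (φ : ι → Module.Dual R N) (q : ι → N) (j : ι) : N :=
  ∑ l, (Matrix.of fun i' j' => φ i' (q j'))⁻¹ l j • q l

lemma apply_dualFamily (hM : IsUnit (Matrix.of fun i j => φ i (q j)).det) (i j : ι) :
    φ i (dualFamily φ q j) = if i = j then 1 else 0 := by
  rw [← Matrix.one_apply, ← Matrix.mul_nonsing_inv _ hM]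
  simp [dualFamily, Matrix.mul_apply, mul_comm]

lemma sum_apply_smul_dualFamily (hM : IsUnit (Matrix.of fun i j => φ i (q j)).det) {g : N}
    (hg : g ∈ Submodule.span R (Set.range q)) :
    ∑ i, φ i g • dualFamily φ q i = g := by
  set M := Matrix.of fun i j => φ i (q j) with hMdef
  have reproduces_q (j : ι) : ∑ i, φ i (q j) • dualFamily φ q i = q j :=
    calc ∑ i, φ i (q j) • dualFamily φ q i
        = ∑ l, (M⁻¹ * M) l j • q l := by
          simp only [dualFamily, Finset.smul_sum, smul_smul, Matrix.mul_apply, Finset.sum_smul]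
          rw [Finset.sum_comm]
          simp only [hMdef, Matrix.of_apply, mul_comm]
      _ = q j := by simp [Matrix.nonsing_inv_mul _ hM, Matrix.one_apply]
  let reconstruct : N →ₗ[R] N := ∑ i, (φ i).smulRight (dualFamily φ q i)
  have eqOn_range : Set.EqOn reconstruct (LinearMap.id (R := R)) (Set.range q) := by
    rintro _ ⟨j, rfl⟩
    simpa [reconstruct] using reproduces_q j
  simpa [reconstruct] using LinearMap.eqOn_span eqOn_range hg

end DualFamily

lemma prod_tmul_prod {R A B ι : Type*} [CommSemiring R] [CommSemiring A] [CommSemiring B]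
    [Algebra R A] [Algebra R B] (s : Finset ι) (u : ι → A) (w : ι → B) :
    ∏ i ∈ s, u i ⊗ₜ[R] w i = (∏ i ∈ s, u i) ⊗ₜ[R] (∏ i ∈ s, w i) := by
  classical
  induction s using Finset.induction_on with
  | empty => simp [Algebra.TensorProduct.one_def]
  | insert i s hi ih => simp [Finset.prod_insert hi, ih]

section ApolarityForm

variable {R σ : Type*} [CommSemiring R]

/-- The multi-index factorial `a! = ∏ j, (a j)!`. -/
def multiFactorial (a : σ →₀ ℕ) : ℕ :=
  a.prod fun _ m => m.factorial

lemma multiFactorial_add_single_one (a : σ →₀ ℕ) (j : σ) :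
    multiFactorial (a + Finsupp.single j 1) = (a j + 1) * multiFactorial a := by
  have split (b : σ →₀ ℕ) :
      multiFactorial b = (b j).factorial * (b.erase j).prod fun _ m => m.factorial :=
    (Finsupp.mul_prod_erase' b j _ fun _ => Nat.factorial_zero).symm
  rw [split, split a]
  simp [Finsupp.erase_add, Nat.factorial_succ, mul_assoc]

variable (R σ) in
/-- The apolarity pairing as a bilinear form, determined by `D(xᵃ, xᵇ) = a!` if `a = b` and `0`
otherwise; `apolS_eq_apolarityForm` identifies it with differentiation followed by evaluation
at `0`. -/
def apolarityForm : LinearMap.BilinForm R (MvPolynomial σ R) :=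
  (basisMonomials σ R).constr R fun a => (multiFactorial a : R) • lcoeff R a

lemma apolarityForm_monomial (a : σ →₀ ℕ) (f : MvPolynomial σ R) :
    apolarityForm R σ (monomial a 1) f = multiFactorial a * coeff a f := by
  have h := (basisMonomials σ R).constr_basis R
    (fun a => (multiFactorial a : R) • lcoeff R a) a
  rw [coe_basisMonomials] at h
  simp [apolarityForm, h]

lemma apolarityForm_one (f : MvPolynomial σ R) : apolarityForm R σ 1 f = constantCoeff f := by
  simpa [multiFactorial, constantCoeff_eq] using apolarityForm_monomial 0 f

lemma apolarityForm_isSymm : (apolarityForm R σ).IsSymm := by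
  classical
  refine (LinearMap.BilinForm.isSymm_iff_basis (basisMonomials σ R)).2 fun a b => ?_
  rcases eq_or_ne a b with rfl | hab
  · rfl
  · simp [apolarityForm_monomial, coeff_monomial, hab, hab.symm]

lemma apolarityForm_X_mul (j : σ) (u f : MvPolynomial σ R) :
    apolarityForm R σ (X j * u) f = apolarityForm R σ u (pderiv j f) := by
  suffices apolarityForm R σ ∘ₗ LinearMap.mulLeft R (X j) =
      (apolarityForm R σ).compl₂ (pderiv j).toLinearMap from LinearMap.congr_fun₂ this u f
  refine (basisMonomials σ R).ext fun a => LinearMap.ext fun g => ?_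
  have h : (X j : MvPolynomial σ R) * monomial a 1 = monomial (a + Finsupp.single j 1) 1 := by
    rw [X, monomial_mul, one_mul, add_comm]
  simp only [coe_basisMonomials, LinearMap.comp_apply, LinearMap.mulLeft_apply,
    LinearMap.compl₂_apply, Derivation.coeFn_coe, h, apolarityForm_monomial, coeff_pderiv,
    multiFactorial_add_single_one]
  push_cast
  ring

lemma apolarityForm_X_pow_mul (j : σ) (m : ℕ) (u f : MvPolynomial σ R) :
    apolarityForm R σ (X j ^ m * u) f =
      apolarityForm R σ u (((pderiv j).toLinearMap ^ m) f) := by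
  induction m generalizing f with
  | zero => simp
  | succ m ih =>
    rw [pow_succ', mul_assoc, apolarityForm_X_mul, ih, pow_succ, Module.End.mul_apply,
      Derivation.coeFn_coe]

lemma apolarityForm_list_prod_X_pow (L : List σ) (a : σ → ℕ) (f : MvPolynomial σ R) :
    apolarityForm R σ (L.map fun j => X j ^ a j).prod f =
      constantCoeff ((L.map fun j => (pderiv j).toLinearMap ^ a j).prod f) := by
  suffices ∀ u, apolarityForm R σ ((L.map fun j => X j ^ a j).prod * u) f =
      apolarityForm R σ u ((L.map fun j => (pderiv j).toLinearMap ^ a j).prod f) by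
    simpa [apolarityForm_one] using this 1
  induction L with
  | nil => simp
  | cons j L ih =>
    intro u
    rw [List.map_cons, List.map_cons, List.prod_cons, List.prod_cons, Module.End.mul_apply,
      ← apolarityForm_X_pow_mul, ← ih, mul_left_comm, mul_assoc]

end ApolarityForm

section DifferentiationPairing

variable {K σ : Type*} [Field K] [Fintype σ] [DecidableEq σ]

lemma constantCoeff_derivOp (a : σ →₀ ℕ) (f : MvPolynomial σ K) :
    constantCoeff (derivOp K a f) = apolarityForm K σ (monomial a 1) f := by
  rw [derivOp, ← apolarityForm_list_prod_X_pow, Finset.prod_map_toList, monomial_eq,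
    Finsupp.prod_fintype _ _ fun _ => pow_zero _, C_1, one_mul]

lemma apolS_eq_apolarityForm (u f : MvPolynomial σ K) : apolS u f = apolarityForm K σ u f := by
  conv_rhs => rw [u.as_sum]
  simp only [apolS, apol, map_sum, constantCoeff_smul, constantCoeff_derivOp, LinearMap.sum_apply]
  refine Finset.sum_congr rfl fun a _ => ?_
  rw [← LinearMap.smul_apply, ← map_smul, smul_monomial, smul_eq_mul, mul_one]

end DifferentiationPairing

section CanonicalTensor

variable {R σ : Type*} [CommSemiring R]

/-- Contraction `u ⊗ w ↦ D(u, f) • w` of the left tensor factor against `f`. -/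
def apolarityContraction (f : MvPolynomial σ R) :
    MvPolynomial σ R ⊗[R] MvPolynomial σ R →ₗ[R] MvPolynomial σ R :=
  (TensorProduct.lid R _).toLinearMap ∘ₗ ((apolarityForm R σ).flip f).rTensor _

lemma apolarityContraction_tmul (f u w : MvPolynomial σ R) :
    apolarityContraction f (u ⊗ₜ[R] w) = apolarityForm R σ u f • w := by
  simp [apolarityContraction]

lemma apolarityContraction_X_tmul_X_mul (f : MvPolynomial σ R) (j : σ)
    (T : MvPolynomial σ R ⊗[R] MvPolynomial σ R) :
    apolarityContraction f (X j ⊗ₜ[R] X j * T) = X j * apolarityContraction (pderiv j f) T := by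
  induction T with
  | zero => simp
  | add S T hS hT => simp only [mul_add, map_add, hS, hT]
  | tmul u w =>
    simp only [Algebra.TensorProduct.tmul_mul_tmul, apolarityContraction_tmul,
      apolarityForm_X_mul, mul_smul_comm]

variable [Fintype σ]

variable (R σ) in
/-- The canonical element `∑ j, Xⱼ ⊗ Xⱼ` of `W ⊗ W*`, inside the tensor square of the polynomial
ring. -/
def canonicalTensor : MvPolynomial σ R ⊗[R] MvPolynomial σ R :=
  ∑ j, X j ⊗ₜ[R] X j

lemma canonicalTensor_pow (m : ℕ) :
    canonicalTensor R σ ^ m = ∑ w : Fin m → σ, (∏ l, X (w l)) ⊗ₜ[R] ∏ l, X (w l) := by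
  simp only [canonicalTensor, Fintype.sum_pow, prod_tmul_prod]

lemma apolarityContraction_canonicalTensor_pow {m : ℕ} {f : MvPolynomial σ R}
    (hf : f.IsHomogeneous m) :
    apolarityContraction f (canonicalTensor R σ ^ m) = m.factorial • f := by
  induction m generalizing f with
  | zero =>
    obtain ⟨c, rfl⟩ : ∃ c, f = C c :=
      ⟨_, totalDegree_eq_zero_iff_eq_C.1 ((totalDegree_zero_iff_isHomogeneous _).2 hf)⟩
    simp [Algebra.TensorProduct.one_def, apolarityContraction_tmul, apolarityForm_one,
      smul_eq_C_mul]
  | succ m ih =>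
    calc apolarityContraction f (canonicalTensor R σ ^ (m + 1))
        = ∑ j, X j * apolarityContraction (pderiv j f) (canonicalTensor R σ ^ m) := by
          rw [pow_succ', canonicalTensor, Finset.sum_mul, map_sum]
          simp only [apolarityContraction_X_tmul_X_mul]
      _ = m.factorial • ∑ j, X j * pderiv j f := by
          simp only [fun j => ih (hf.pderiv (i := j)), mul_smul_comm, Finset.smul_sum]
      _ = (m + 1).factorial • f := by
          rw [hf.sum_X_mul_pderiv, smul_smul, Nat.factorial_succ, mul_comm]

lemma sum_apolarityForm_prod_X_smul {m : ℕ} {g : MvPolynomial σ R} (hg : g.IsHomogeneous m) :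
    ∑ w : Fin m → σ, apolarityForm R σ (∏ l, X (w l)) g • ∏ l, X (w l) = m.factorial • g := by
  simp only [← apolarityContraction_canonicalTensor_pow hg, canonicalTensor_pow, map_sum,
    apolarityContraction_tmul]

end CanonicalTensor

section Reconstruction

variable {R σ ι : Type*} [CommSemiring R] [Fintype ι] {d : ℕ} {p e : ι → MvPolynomial σ R}

lemma isUnit_factorial_of_reproducing [Nonempty σ]
    (he : ∀ g, g.IsHomogeneous d → ∑ i, apolarityForm R σ (p i) g • e i = g) :
    IsUnit (d.factorial : R) := by
  classical
  obtain ⟨j⟩ := ‹Nonempty σ›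
  have pairing (i : ι) : apolarityForm R σ (p i) (X j ^ d) =
      d.factorial * coeff (Finsupp.single j d) (p i) := by
    rw [apolarityForm_isSymm.eq, X_pow_eq_monomial, apolarityForm_monomial]
    simp [multiFactorial]
  have coeff_eq := congrArg (coeff (Finsupp.single j d)) (he _ (isHomogeneous_X_pow j d))
  simp only [pairing, coeff_sum, coeff_smul, smul_eq_mul, mul_assoc, ← Finset.mul_sum,
    coeff_X_pow, if_true] at coeff_eq
  exact .of_mul_eq_one _ coeff_eq

lemma canonicalTensor_pow_eq_factorial_smul [Fintype σ] (hp : ∀ i, (p i).IsHomogeneous d)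
    (he : ∀ g, g.IsHomogeneous d → ∑ i, apolarityForm R σ (p i) g • e i = g) :
    canonicalTensor R σ ^ d = d.factorial • ∑ i, p i ⊗ₜ[R] e i := by
  have hom (w : Fin d → σ) : (∏ l, X (w l) : MvPolynomial σ R).IsHomogeneous d := by
    simpa using IsHomogeneous.prod Finset.univ _ _ fun l _ => isHomogeneous_X R (w l)
  calc canonicalTensor R σ ^ d
      = ∑ w : Fin d → σ, (∏ l, X (w l)) ⊗ₜ[R]
          ∑ i, apolarityForm R σ (p i) (∏ l, X (w l)) • e i := by
        simp only [canonicalTensor_pow, fun w => he _ (hom w)]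
    _ = ∑ i, (∑ w : Fin d → σ,
          apolarityForm R σ (∏ l, X (w l)) (p i) • ∏ l, X (w l)) ⊗ₜ[R] e i := by
        simp only [TensorProduct.tmul_sum, TensorProduct.tmul_smul, TensorProduct.sum_tmul,
          TensorProduct.smul_tmul', apolarityForm_isSymm.eq (p _)]
        exact Finset.sum_comm
    _ = d.factorial • ∑ i, p i ⊗ₜ[R] e i := by
        simp only [fun i => sum_apolarityForm_prod_X_smul (hp i), Finset.smul_sum,
          TensorProduct.smul_tmul']

lemma factorial_pow_smul_sum_apolarityForm_prod [Finite σ] (hp : ∀ i, (p i).IsHomogeneous d)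
    (he : ∀ g, g.IsHomogeneous d → ∑ i, apolarityForm R σ (p i) g • e i = g)
    {k : ℕ} {f : MvPolynomial σ R} (hf : f.IsHomogeneous (k * d)) :
    d.factorial ^ k • ∑ t : Fin k → ι, apolarityForm R σ (∏ l, p (t l)) f • ∏ l, e (t l) =
      (k * d).factorial • f := by
  cases nonempty_fintype σ
  calc d.factorial ^ k • ∑ t : Fin k → ι, apolarityForm R σ (∏ l, p (t l)) f • ∏ l, e (t l)
      = apolarityContraction f ((d.factorial • ∑ i, p i ⊗ₜ[R] e i) ^ k) := by
        simp only [smul_pow, Fintype.sum_pow, prod_tmul_prod, map_nsmul, map_sum,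
          apolarityContraction_tmul]
    _ = apolarityContraction f (canonicalTensor R σ ^ (k * d)) := by
        rw [← canonicalTensor_pow_eq_factorial_smul hp he, ← pow_mul, mul_comm]
    _ = (k * d).factorial • f := apolarityContraction_canonicalTensor_pow hf

end Reconstruction

theorem dual_basis_and_reconstruction_via_pairing_matrix_general
    {K σ ι : Type*} [Field K] [Fintype σ] [DecidableEq σ] [Nonempty σ] [Fintype ι] [DecidableEq ι]
    {d k : ℕ} {p q : ι → MvPolynomial σ K} (hp : ∀ i, (p i).IsHomogeneous d)
    (hq : homogeneousSubmodule σ K d ≤ Submodule.span K (Set.range q))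
    (hM : IsUnit (Matrix.of fun i j => apolS (p i) (q j)).det)
    {f : MvPolynomial σ K} (hf : f.IsHomogeneous (k * d)) :
    (∀ i j, apolS (p i)
        (∑ l, (Matrix.of fun i' j' => apolS (p i') (q j'))⁻¹ l j • q l)
      = if i = j then 1 else 0)
    ∧ ∑ t : Fin k → ι,
        apolS (∏ l, p (t l)) f •
          ∏ l, (∑ a, (Matrix.of fun i' j' => apolS (p i') (q j'))⁻¹ a (t l) • q a)
      = ((Nat.factorial (k * d) : K) / (Nat.factorial d : K) ^ k) • f := by
  simp only [apolS_eq_apolarityForm] at hM ⊢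
  have reproducing (g : MvPolynomial σ K) (hg : g.IsHomogeneous d) :
      ∑ i, apolarityForm K σ (p i) g • dualFamily (fun i => apolarityForm K σ (p i)) q i = g :=
    sum_apply_smul_dualFamily hM (hq hg)
  refine ⟨apply_dualFamily hM, ?_⟩
  have hd : (d.factorial : K) ^ k ≠ 0 :=
    pow_ne_zero k (isUnit_factorial_of_reproducing reproducing).ne_zero
  rw [div_eq_inv_mul, mul_smul, eq_inv_smul_iff₀ hd]
  exact_mod_cast factorial_pow_smul_sum_apolarityForm_prod hp reproducing hf

/-- given evaluated covariants `qf = (qᵢ(f)) ⊂ Sym^d(W*)` and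
contravariants `pf = (pᵢ(f)) ⊂ Sym^d(W)`, both bases, with pairing matrix
`M = (D(pᵢ, qⱼ))`, the dual basis of `(pᵢ(f))` under the apolarity pairing is
`pⱼ* = ∑_l (M⁻¹)_{l j} q_l` (i.e. the tuple `M⁻¹·(qⱼ)ⱼ`), and consequently, for
`f ∈ Sym^{kd}(W*)`, the form
`f̃ = ∑ D(p_{i₁}⋯p_{i_k}, f) X_{i₁}⋯X_{i_k}` satisfies
`f̃(p₀*,…,p_r*) = ((kd)!/d!^k)·f`. -/
theorem dual_basis_and_reconstruction_via_pairing_matrix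
    (K : Type*) [Field K] (n d k : ℕ) (hd : 1 ≤ d) (hk : 1 ≤ k)
    (hchar : ∀ i : ℕ, 0 < i → i ≤ k * d → (i : K) ≠ 0)
    (pf qf : MonIdx (n + 1) d → MvPolynomial (Fin (n + 1)) K)
    (hpf : ∀ i, (pf i).IsHomogeneous d) (hqf : ∀ j, (qf j).IsHomogeneous d)
    (hqspan : Submodule.span K (Set.range qf) = homogeneousSubmodule (Fin (n + 1)) K d)
    (hM : IsUnit (Matrix.of fun i j => apolS (pf i) (qf j)).det)
    (f : MvPolynomial (Fin (n + 1)) K) (hf : f.IsHomogeneous (k * d)) :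
    (∀ i j, apolS (pf i)
        (∑ l, (Matrix.of fun i' j' => apolS (pf i') (qf j'))⁻¹ l j • qf l)
      = if i = j then 1 else 0)
    ∧ ∑ t : Fin k → MonIdx (n + 1) d,
        apolS (∏ l, pf (t l)) f •
          ∏ l, (∑ a, (Matrix.of fun i' j' => apolS (pf i') (qf j'))⁻¹ a (t l) • qf a)
      = ((Nat.factorial (k * d) : K) / (Nat.factorial d : K) ^ k) • f :=
  dual_basis_and_reconstruction_via_pairing_matrix_general hpf hqspan.ge hM hf
end
end

section
/- For binary forms, the linear map τ_r : Sym^r(W*) → Sym^r(W) defined on monomials by τ_r(x₀^i x₁^j) = r!·(−1)^i·w₀^j w₁^i satisfies, for all C ∈ Sym^r(W*) and C' ∈ Sym^{r'}(W*) with r' ≥ r: D(τ_r(C), C') = (C, C')_r, where (C, C')_r is the r-th transvectant. -/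
open MvPolynomial

noncomputable section

/-- The exponent vector `(a, b)` for binary forms. -/
def bexp (a b : ℕ) : Fin 2 →₀ ℕ := Finsupp.equivFunOnFinite.symm ![a, b]

/-- The transvectant of level `l` of two binary forms:
`(f,g)_l = ∑_{i=0}^l (−1)^i binom(l,i) (∂^l f/∂x₀^i ∂x₁^{l−i}) (∂^l g/∂x₀^{l−i} ∂x₁^i)`. -/
def transvect {K : Type*} [Field K] (l : ℕ)
    (f g : MvPolynomial (Fin 2) K) : MvPolynomial (Fin 2) K :=
  ∑ i ∈ Finset.range (l + 1),
    ((-1 : K) ^ i * (l.choose i : K)) •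
      (derivOp K (bexp i (l - i)) f * derivOp K (bexp (l - i) i) g)

/-- The linear map `τ_r : Sym^r(W*) → Sym^r(W)` for binary forms, determined by
`τ_r(x₀^i x₁^j) = r!·(−1)^i·w₀^j w₁^i`. -/
def tauBin (K : Type*) [Field K] (r : ℕ) (P : MvPolynomial (Fin 2) K) :
    MvPolynomial (Fin 2) K :=
  ∑ a ∈ P.support,
    (P.coeff a * (Nat.factorial r : K) * (-1 : K) ^ (a 0)) •
      monomial (bexp (a 1) (a 0)) 1

/-!
An `r`-th order partial derivative of a form of degree `r` is a constant: `∂₀^i ∂₁^j` with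
`i + j = r` extracts the coefficient of `x₀^i x₁^j`, multiplied by `i! j!`. Since
`binom(r,i) i! j! = r!`, the `i`-th summand of `(P,Q)_r` is therefore `(−1)^i r!` times that
coefficient times `∂₀^j ∂₁^i Q`, which is what the monomial `x₀^i x₁^j` contributes to
`D(τ_r(P), Q)`.
-/

section PartialDerivatives

variable {σ R : Type*} [CommSemiring R]

theorem coeff_pderiv_pow (j : σ) (n : ℕ) (P : MvPolynomial σ R) (m : σ →₀ ℕ) :
    coeff m (((pderiv j).toLinearMap ^ n) P) =
      coeff (m + Finsupp.single j n) P * ((m j + 1).ascFactorial n : R) := by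
  induction n generalizing P with
  | zero => simp
  | succ n ih =>
    rw [pow_succ, Module.End.mul_apply, ih, Derivation.coeFn_coe, coeff_pderiv, add_assoc,
      ← Finsupp.single_add, Nat.ascFactorial_succ, Finsupp.add_apply, Finsupp.single_eq_same]
    push_cast
    ring

theorem coeff_prod_pderiv_pow {l : List σ} (hl : l.Nodup) (a m : σ →₀ ℕ) (P : MvPolynomial σ R) :
    coeff m ((l.map fun j => (pderiv j).toLinearMap ^ a j).prod P) =
      coeff (m + (l.map fun j => Finsupp.single j (a j)).sum) P *
        ((l.map fun j => (m j + 1).ascFactorial (a j)).prod : ℕ) := by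
  induction l generalizing m with
  | nil => simp
  | cons j l ih =>
    obtain ⟨hj, hl⟩ := List.nodup_cons.1 hl
    have shift_eq : (l.map fun i => ((m + Finsupp.single j (a j)) i + 1).ascFactorial (a i)) =
        l.map fun i => (m i + 1).ascFactorial (a i) := by
      refine List.map_congr_left fun i hi => ?_
      rw [Finsupp.add_apply, Finsupp.single_eq_of_ne (ne_of_mem_of_not_mem hi hj), add_zero]
    simp only [List.map_cons, List.prod_cons, List.sum_cons]
    rw [Module.End.mul_apply, coeff_pderiv_pow, ih hl, shift_eq, add_assoc]
    push_cast
    ring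

end PartialDerivatives

section Apolarity

variable {K σ : Type*} [Field K] [Fintype σ] [DecidableEq σ]

theorem coeff_derivOp (a m : σ →₀ ℕ) (P : MvPolynomial σ K) :
    coeff m (derivOp K a P) =
      coeff (m + a) P * (∏ j, (m j + 1).ascFactorial (a j) : ℕ) := by
  rw [derivOp, coeff_prod_pderiv_pow (Finset.nodup_toList _), Finset.sum_map_toList,
    Finset.prod_map_toList, Finsupp.univ_sum_single]

theorem derivOp_eq_C_of_isHomogeneous {a : σ →₀ ℕ} {P : MvPolynomial σ K}
    (hP : P.IsHomogeneous a.degree) :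
    derivOp K a P = C (coeff a P * (∏ j, (a j).factorial : ℕ)) := by
  ext m
  rw [coeff_derivOp, coeff_C]
  split_ifs with hm
  · simp [← hm, Nat.one_ascFactorial]
  · have degree_ne : (m + a).degree ≠ a.degree := by
      simpa [Finsupp.degree_eq_zero_iff] using Ne.symm hm
    rw [hP.coeff_eq_zero degree_ne, zero_mul]

theorem apol_eq_constr (u P : MvPolynomial σ K) :
    apol u P = (basisMonomials σ K).constr K (fun a => derivOp K a P) u := by
  rw [Module.Basis.constr_apply]
  rfl

theorem apol_sum_smul_monomial {ι : Type*} (s : Finset ι) (c : ι → K) (a : ι → σ →₀ ℕ)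
    (P : MvPolynomial σ K) :
    apol (∑ i ∈ s, c i • monomial (a i) 1) P = ∑ i ∈ s, c i • derivOp K (a i) P := by
  simp only [apol_eq_constr, map_sum, map_smul, ← congr_fun (coe_basisMonomials σ K),
    Module.Basis.constr_basis]

end Apolarity

section BinaryForms

open Finset.HasAntidiagonal

theorem bexp_apply_zero (i j : ℕ) : bexp i j 0 = i := rfl

theorem bexp_apply_one (i j : ℕ) : bexp i j 1 = j := rfl

theorem bexp_apply_zero_apply_one (a : Fin 2 →₀ ℕ) : bexp (a 0) (a 1) = a := by
  ext k
  fin_cases k <;> rfl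

theorem degree_bexp (i j : ℕ) : (bexp i j).degree = i + j := by
  rw [Finsupp.degree_eq_sum, Fin.sum_univ_two, bexp_apply_zero, bexp_apply_one]

theorem sum_support_eq_sum_antidiagonal_of_isHomogeneous {R M : Type*} [CommSemiring R]
    [AddCommMonoid M] {r : ℕ} {P : MvPolynomial (Fin 2) R} (hP : P.IsHomogeneous r)
    (f : (Fin 2 →₀ ℕ) → R → M) (hf : ∀ a, f a 0 = 0) :
    ∑ a ∈ P.support, f a (coeff a P) =
      ∑ ij ∈ antidiagonal r, f (bexp ij.1 ij.2) (coeff (bexp ij.1 ij.2) P) := by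
  refine Finset.sum_of_injOn (fun a => (a 0, a 1)) ?injOn ?mapsTo ?vanish ?agree
  case injOn =>
    intro a _ b _ hab
    obtain ⟨h0, h1⟩ := Prod.mk.inj hab
    rw [← bexp_apply_zero_apply_one a, h0, h1, bexp_apply_zero_apply_one]
  case mapsTo =>
    intro a ha
    have degree_eq : a.degree = r := (hP.degree_eq_sum_deg_support ha).symm
    rw [Finsupp.degree_eq_sum, Fin.sum_univ_two] at degree_eq
    exact Finset.mem_coe.2 (mem_antidiagonal.2 degree_eq)
  case vanish =>
    rintro ⟨i, j⟩ - hij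
    have coeff_eq : coeff (bexp i j) P = 0 :=
      notMem_support_iff.1 fun h => hij ⟨bexp i j, h, rfl⟩
    rw [coeff_eq, hf]
  case agree =>
    intro a _
    rw [bexp_apply_zero_apply_one]

variable {K : Type*} [Field K]

theorem apol_tauBin_of_isHomogeneous {r : ℕ} {P : MvPolynomial (Fin 2) K}
    (hP : P.IsHomogeneous r) (Q : MvPolynomial (Fin 2) K) :
    apol (tauBin K r P) Q = ∑ ij ∈ antidiagonal r,
      (coeff (bexp ij.1 ij.2) P * (r.factorial : K) * (-1) ^ ij.1) •
        derivOp K (bexp ij.2 ij.1) Q := by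
  rw [tauBin, apol_sum_smul_monomial]
  exact sum_support_eq_sum_antidiagonal_of_isHomogeneous hP
    (fun a c => (c * (r.factorial : K) * (-1) ^ a 0) • derivOp K (bexp (a 1) (a 0)) Q) (by simp)

theorem derivOp_bexp_of_isHomogeneous {i j : ℕ} {P : MvPolynomial (Fin 2) K}
    (hP : P.IsHomogeneous (i + j)) :
    derivOp K (bexp i j) P = C (coeff (bexp i j) P * (i.factorial * j.factorial : ℕ)) := by
  rw [derivOp_eq_C_of_isHomogeneous (by rwa [degree_bexp]), Fin.prod_univ_two, bexp_apply_zero,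
    bexp_apply_one]

theorem transvect_of_isHomogeneous {r : ℕ} {P : MvPolynomial (Fin 2) K}
    (hP : P.IsHomogeneous r) (Q : MvPolynomial (Fin 2) K) :
    transvect r P Q = ∑ ij ∈ antidiagonal r,
      (coeff (bexp ij.1 ij.2) P * (r.factorial : K) * (-1) ^ ij.1) •
        derivOp K (bexp ij.2 ij.1) Q := by
  rw [transvect, ← Finset.Nat.sum_antidiagonal_eq_sum_range_succ fun i j =>
    ((-1 : K) ^ i * (r.choose i : K)) • (derivOp K (bexp i j) P * derivOp K (bexp j i) Q)]
  refine Finset.sum_congr rfl fun ⟨i, j⟩ hij => ?_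
  obtain rfl : i + j = r := mem_antidiagonal.1 hij
  have factorial_eq : ((i + j).factorial : K) =
      (i + j).choose i * (i.factorial * j.factorial : ℕ) := by
    rw [← Nat.add_choose_mul_factorial_mul_factorial, ← Nat.choose_symm_add, mul_assoc,
      Nat.cast_mul]
  rw [derivOp_bexp_of_isHomogeneous hP, ← smul_eq_C_mul, smul_smul, factorial_eq]
  congr 1
  ring

end BinaryForms

theorem apol_tau_eq_transvectant_general {K : Type*} [Field K] {r : ℕ}
    {P : MvPolynomial (Fin 2) K} (hP : P.IsHomogeneous r) (Q : MvPolynomial (Fin 2) K) :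
    apol (tauBin K r P) Q = transvect r P Q := by
  rw [apol_tauBin_of_isHomogeneous hP, transvect_of_isHomogeneous hP]

/-- for binary forms `C ∈ Sym^r(W*)` and `C' ∈ Sym^{r'}(W*)` with
`r' ≥ r`, the apolarity pairing against `τ_r(C)` computes the `r`-th
transvectant: `D(τ_r(C), C') = (C, C')_r`. -/
theorem apol_tau_eq_transvectant
    (K : Type*) [Field K] [IsAlgClosed K] (r r' : ℕ) (hrr : r ≤ r')
    (hchar : ∀ i : ℕ, 0 < i → i ≤ r → (i : K) ≠ 0)
    (C C' : MvPolynomial (Fin 2) K)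
    (hC : C.IsHomogeneous r) (hC' : C'.IsHomogeneous r') :
    apol (tauBin K r C) C' = transvect r C C' :=
  apol_tau_eq_transvectant_general hC C'
end
end
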